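/- arXiv:0901.2840 — 2 statements merged into one kernel-verified Lean document; each statement's English description precedes it below -/
import Mathlib

section
/- Let ξ and ξ_n (n ∈ ℕ) be random measures on ℝ^d, defined on a probability space (Ω, 𝒜, P), with locally finite intensity measures E ξ and E ξ_n, and assume ξ is stationary, i.e. ξθ_x has the same distribution as ξ for every x ∈ ℝ^d. Let Q be a probability measure on M_d and let Q^n_s (s ∈ ℝ^d) be probability kernels from ℝ^d to M_d that are versions of the associated shifted Palm distributions, i.e. E ∫ f(s, ξθ_s) ξ(ds) = ∫ E ξ(ds) ∫ f(s, μ) Q(dμ) and E ∫ f(s, ξ_nθ_s) ξ_n(ds) = ∫ E ξ_n(ds) ∫ f(s, μ) Q^n_s(dμ) for all measurable f ≥ 0 on ℝ^d × M_d. Fix a bounded Borel set B ⊂ ℝ^d satisfying, as n → ∞: (i) E ξ_n B → E ξ B > 0; (ii) the total variation of the measure A ↦ E[ξ_n B; ξ_n ∈ A] - E[ξ B; ξ ∈ A] on M_d tends to 0; (iii) sup_{r,s ∈ B} ‖Q^n_r - Q^n_s‖ → 0. Then sup_{s ∈ B} ‖Q^n_s - Q‖ → 0 as n → ∞. -/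
open Filter MeasureTheory ProbabilityTheory
open scoped ENNReal

/-- The shift `μθ_x` of a measure on `ℝ^d`, given by `(μθ_x)(B) = μ(x + B)`. -/
noncomputable def shiftMeasure {d : ℕ} (μ : Measure (EuclideanSpace ℝ (Fin d)))
    (x : EuclideanSpace ℝ (Fin d)) : Measure (EuclideanSpace ℝ (Fin d)) :=
  Measure.map (fun y => y - x) μ

/-- The total variation norm `‖ν₁ - ν₂‖` of the difference of two finite measures. -/
noncomputable def tvDist {α : Type*} [MeasurableSpace α] (ν₁ ν₂ : Measure α)
    [IsFiniteMeasure ν₁] [IsFiniteMeasure ν₂] : ℝ≥0∞ :=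
  (ν₁.toSignedMeasure - ν₂.toSignedMeasure).totalVariation Set.univ

/-!
For `φ ≤ 1`, averaging `φ` over the views of a measure `μ` from points drawn from `μ` conditioned
on `B` gives a function of `μ` alone, again bounded by `1`, whose integral against the weighted law
`E[ξB; ξ ∈ ·]` is `∫_B ∫ φ dQ_s E ξ(ds)` for every random measure `ξ`. Closeness of the weighted
laws in total variation therefore passes to the Palm distributions averaged over `B`, and when
these oscillate little on `B` the average may be replaced by the value at a single point.
-/

section TotalVariation

variable {α : Type*} [MeasurableSpace α] (μ ν : Measure α) [IsFiniteMeasure μ] [IsFiniteMeasure ν]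

lemma tvDist_eq_sub_univ_add_sub_univ :
    tvDist μ ν = (μ - ν) Set.univ + (ν - μ) Set.univ := by
  simp only [tvDist, SignedMeasure.totalVariation,
    Measure.toJordanDecomposition_toSignedMeasure_sub,
    Measure.jordanDecompositionOfToSignedMeasureSub_posPart,
    Measure.jordanDecompositionOfToSignedMeasureSub_negPart, Measure.add_apply]

lemma tvDist_self : tvDist μ μ = 0 := by
  simp only [tvDist_eq_sub_univ_add_sub_univ, Measure.sub_self, Measure.coe_zero, Pi.zero_apply,
    add_zero]

lemma tvDist_comm : tvDist μ ν = tvDist ν μ := by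
  rw [tvDist_eq_sub_univ_add_sub_univ, tvDist_eq_sub_univ_add_sub_univ, add_comm]

lemma measure_le_sub_add_self : μ ≤ μ - ν + ν := by
  obtain ⟨s, hs⟩ := exists_isHahnDecomposition μ ν
  have h_on : μ.restrict s ≤ (μ - ν + ν).restrict s := by
    rw [Measure.restrict_add]
    exact Measure.le_add_left hs.le_on
  have h_compl : μ.restrict sᶜ ≤ (μ - ν + ν).restrict sᶜ := by
    rw [Measure.restrict_add,
      Measure.restrict_sub_eq_restrict_sub_restrict hs.measurableSet.compl,
      Measure.sub_add_cancel_of_le hs.ge_on_compl]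
  calc μ
    _ = μ.restrict s + μ.restrict sᶜ :=
      (Measure.restrict_add_restrict_compl hs.measurableSet).symm
    _ ≤ (μ - ν + ν).restrict s + (μ - ν + ν).restrict sᶜ := add_le_add h_on h_compl
    _ = μ - ν + ν := Measure.restrict_add_restrict_compl hs.measurableSet

lemma lintegral_le_lintegral_add_tvDist {g : α → ℝ≥0∞} (hg : ∀ x, g x ≤ 1) :
    ∫⁻ x, g x ∂μ ≤ ∫⁻ x, g x ∂ν + tvDist μ ν :=
  calc ∫⁻ x, g x ∂μ
    _ ≤ ∫⁻ x, g x ∂(μ - ν + ν) := lintegral_mono' (measure_le_sub_add_self μ ν) le_rfl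
    _ = ∫⁻ x, g x ∂ν + ∫⁻ x, g x ∂(μ - ν) := by rw [lintegral_add_measure, add_comm]
    _ ≤ ∫⁻ x, g x ∂ν + (μ - ν) Set.univ := by
      gcongr
      exact (lintegral_mono hg).trans_eq lintegral_one
    _ ≤ ∫⁻ x, g x ∂ν + tvDist μ ν := by
      rw [tvDist_eq_sub_univ_add_sub_univ]
      gcongr
      exact le_self_add

variable {μ ν}

lemma sub_univ_le_of_forall_apply_le_add {c : ℝ≥0∞}
    (h : ∀ A, MeasurableSet A → μ A ≤ ν A + c) : (μ - ν) Set.univ ≤ c := by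
  obtain ⟨s, hs⟩ := exists_isHahnDecomposition μ ν
  calc (μ - ν) Set.univ
    _ = (μ - ν) sᶜ := by
      rw [← measure_add_measure_compl hs.measurableSet,
        Measure.sub_apply_eq_zero_of_isHahnDecomposition hs, zero_add]
    _ = μ sᶜ - ν sᶜ := by
      rw [← Measure.restrict_apply_self (μ - ν),
        Measure.restrict_sub_eq_restrict_sub_restrict hs.measurableSet.compl,
        Measure.sub_apply hs.measurableSet.compl hs.ge_on_compl, Measure.restrict_apply_self,
        Measure.restrict_apply_self]
    _ ≤ c := tsub_le_iff_left.2 (h _ hs.measurableSet.compl)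

lemma tvDist_le_two_mul {c : ℝ≥0∞} (h₁ : ∀ A, MeasurableSet A → μ A ≤ ν A + c)
    (h₂ : ∀ A, MeasurableSet A → ν A ≤ μ A + c) : tvDist μ ν ≤ 2 * c := by
  rw [tvDist_eq_sub_univ_add_sub_univ, two_mul]
  exact add_le_add (sub_univ_le_of_forall_apply_le_add h₁) (sub_univ_le_of_forall_apply_le_add h₂)

end TotalVariation

section SFiniteKernel

variable {α β : Type*} [MeasurableSpace α] [MeasurableSpace β] (κ : Kernel α β)

lemma isSFiniteKernel_of_forall_isFiniteMeasure [∀ a, IsFiniteMeasure (κ a)] :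
    IsSFiniteKernel κ := by
  classical
  let level (j : ℕ) : Set α := {a | ⌊(κ a Set.univ).toReal⌋₊ = j}
  have h_level (j : ℕ) : MeasurableSet (level j) :=
    (Nat.measurable_floor.comp (κ.measurable_coe .univ).ennreal_toReal) (measurableSet_singleton j)
  have h_sum : κ = Kernel.sum fun j => Kernel.piecewise (h_level j) κ 0 := by
    ext a A hA
    rw [Kernel.sum_apply' _ _ hA, tsum_eq_single ⌊(κ a Set.univ).toReal⌋₊]
    · rw [Kernel.piecewise_apply, if_pos (show a ∈ level _ from rfl)]
    · intro j hj
      rw [Kernel.piecewise_apply, if_neg (show a ∉ level j from hj.symm), zero_apply,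
        Measure.coe_zero, Pi.zero_apply]
  have h_finite (j : ℕ) : IsFiniteKernel (Kernel.piecewise (h_level j) κ 0) := by
    refine ⟨⟨j + 1, by finiteness, fun a => ?_⟩⟩
    rw [Kernel.piecewise_apply]
    split_ifs with ha
    · rw [← ENNReal.ofReal_toReal (measure_ne_top (κ a) _), ← Nat.cast_add_one,
        ← ENNReal.ofReal_natCast]
      gcongr
      rw [Nat.cast_add_one, ← show ⌊(κ a Set.univ).toReal⌋₊ = j from ha]
      exact (Nat.lt_floor_add_one _).le
    · exact zero_le
  rw [h_sum]
  infer_instance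

lemma isSFiniteKernel_of_iUnion_eq_univ {D : ℕ → Set β} (hD : ∀ k, MeasurableSet (D k))
    (hD_univ : ⋃ k, D k = Set.univ) (hκ : ∀ a k, κ a (D k) < ∞) : IsSFiniteKernel κ := by
  have h_meas (k : ℕ) : MeasurableSet (disjointed D k) := MeasurableSet.disjointed hD k
  have h_sum : κ = Kernel.sum fun k => κ.restrict (h_meas k) := by
    ext1 a
    simp only [Kernel.sum_apply, Kernel.restrict_apply]
    rw [← Measure.restrict_iUnion (disjoint_disjointed D) h_meas, iUnion_disjointed, hD_univ,
      Measure.restrict_univ]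
  have h_finite (k : ℕ) (a : α) : IsFiniteMeasure (κ.restrict (h_meas k) a) := by
    rw [Kernel.restrict_apply]
    exact isFiniteMeasure_restrict.2
      ((measure_mono (disjointed_subset D k)).trans_lt (hκ a k)).ne
  have h_sfinite (k : ℕ) : IsSFiniteKernel (κ.restrict (h_meas k)) :=
    isSFiniteKernel_of_forall_isFiniteMeasure _
  rw [h_sum]
  infer_instance

end SFiniteKernel

section Recenter

variable {E : Type*} [AddGroup E] [MeasurableSpace E]

/-- The measure `μ` seen from the point `x`, written `μθ_x` in the paper; on `ℝ^d` this is
`shiftMeasure`. -/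
noncomputable def recenter (μ : Measure E) (x : E) : Measure E :=
  μ.map fun y => y - x

/-- The average of `φ` over the views of `μ` from its points in `B`: the expectation of `φ(μθ_s)`
when `s` is drawn from `μ` conditioned on `B`. It is `0` if `μ B` is `0` or `∞`. -/
noncomputable def recenterAverage (B : Set E) (φ : Measure E → ℝ≥0∞) (μ : Measure E) : ℝ≥0∞ :=
  ∫⁻ s, φ (recenter μ s) ∂μ[|B]

variable {B : Set E} {φ : Measure E → ℝ≥0∞}

lemma recenterAverage_eq_inv_mul (μ : Measure E) :
    recenterAverage B φ μ = (μ B)⁻¹ * ∫⁻ s in B, φ (recenter μ s) ∂μ :=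
  lintegral_smul_measure _ _

lemma recenterAverage_le_one (hφ : ∀ μ, φ μ ≤ 1) (μ : Measure E) : recenterAverage B φ μ ≤ 1 :=
  calc recenterAverage B φ μ
    _ ≤ ∫⁻ _, 1 ∂μ[|B] := lintegral_mono fun _ => hφ _
    _ ≤ 1 := by rw [lintegral_one]; exact prob_le_one

lemma apply_mul_recenterAverage {μ : Measure E} (hμ : μ B ≠ ∞) :
    μ B * recenterAverage B φ μ = ∫⁻ s in B, φ (recenter μ s) ∂μ := by
  rw [recenterAverage_eq_inv_mul]
  by_cases h_zero : μ B = 0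
  · rw [h_zero, zero_mul, setLIntegral_measure_zero _ _ h_zero]
  · rw [← mul_assoc, ENNReal.mul_inv_cancel h_zero hμ, one_mul]

variable [MeasurableSub₂ E]

lemma measurable_recenter_kernel {α : Type*} [MeasurableSpace α] (κ : Kernel α E)
    [IsSFiniteKernel κ] : Measurable fun p : α × E => recenter (κ p.1) p.2 := by
  refine Measure.measurable_of_measurable_coe _ fun C hC => ?_
  have h_meas : MeasurableSet {q : (α × E) × E | q.2 - q.1.2 ∈ C} :=
    (measurable_snd.sub (measurable_snd.comp measurable_fst)) hC
  convert Kernel.measurable_kernel_prodMk_left (κ := κ.comap Prod.fst measurable_fst) h_meas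
    using 2 with p
  rw [recenter, Measure.map_apply (measurable_id'.sub_const _) hC, Kernel.comap_apply]
  rfl

-- `measurable_recenter_kernel` applies to almost every `μ` because the inclusion of the measures
-- that are finite on every `D k` is an s-finite kernel.
lemma aemeasurable_recenterAverage {ν : Measure (Measure E)} {D : ℕ → Set E}
    (hD : ∀ k, MeasurableSet (D k)) (hD_univ : ⋃ k, D k = Set.univ)
    (hν : ∀ᵐ μ ∂ν, ∀ k, μ (D k) < ∞) (hB : MeasurableSet B) (hφ : Measurable φ) :
    AEMeasurable (recenterAverage B φ) ν := by
  let L : Set (Measure E) := {μ | ∀ k, μ (D k) < ∞}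
  have hL : MeasurableSet L := by
    simp only [L, Set.ofPred_forall]
    exact .iInter fun k => measurableSet_lt (Measure.measurable_coe (hD k)) measurable_const
  let κ : Kernel L E := ⟨Subtype.val, measurable_subtype_coe⟩
  have : IsSFiniteKernel κ := isSFiniteKernel_of_iUnion_eq_univ κ hD hD_univ fun μ => μ.2
  have h_meas : Measurable fun μ : L => recenterAverage B φ μ := by
    simp only [recenterAverage_eq_inv_mul]
    exact (κ.measurable_coe hB).inv.mul
      (Measurable.setLIntegral_kernel_prod_right (κ := κ) (f := fun μ s => φ (recenter μ s))
        (hφ.comp (measurable_recenter_kernel κ)) hB)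
  rw [← Measure.restrict_eq_self_of_ae_mem (s := L) hν]
  exact aemeasurable_restrict_of_measurable_subtype hL h_meas

end Recenter

section Palm

/-- `ν` is the weighted law `A ↦ E[ξB; ξ ∈ A]` of the random measure `ξ` under `P`. -/
def IsWeightedLaw {Ω E : Type*} [MeasurableSpace Ω] [MeasurableSpace E] (P : Measure Ω)
    (ξ : Ω → Measure E) (B : Set E) (ν : Measure (Measure E)) : Prop :=
  ∀ A, MeasurableSet A → ν A = ∫⁻ ω in ξ ⁻¹' A, ξ ω B ∂P

/-- `ξ` is a random measure with σ-finite intensity `I`, and the `Q s` are versions of its shifted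
Palm distributions. Local finiteness of the intensity is encoded as σ-finiteness, so that `E` needs
no topology. -/
structure IsShiftedPalm {Ω E : Type*} [MeasurableSpace Ω] [AddGroup E] [MeasurableSpace E]
    (P : Measure Ω) (ξ : Ω → Measure E) (I : Measure E) (Q : E → Measure (Measure E)) :
    Prop where
  measurable : Measurable ξ
  intensity_apply : ∀ A, MeasurableSet A → I A = ∫⁻ ω, ξ ω A ∂P
  sigmaFinite : SigmaFinite I
  lintegral_recenter : ∀ f : E × Measure E → ℝ≥0∞, Measurable f →
    ∫⁻ ω, ∫⁻ s, f (s, recenter (ξ ω) s) ∂(ξ ω) ∂P = ∫⁻ s, ∫⁻ μ, f (s, μ) ∂(Q s) ∂I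

lemma IsWeightedLaw.eq_map_withDensity {Ω E : Type*} [MeasurableSpace Ω] [MeasurableSpace E]
    {P : Measure Ω} {ξ : Ω → Measure E} {B : Set E} {ν : Measure (Measure E)}
    (hν : IsWeightedLaw P ξ B ν) (hξ : Measurable ξ) :
    ν = (P.withDensity fun ω => ξ ω B).map ξ := by
  ext A hA
  rw [hν A hA, Measure.map_apply hξ hA, withDensity_apply _ (hξ hA)]

namespace IsShiftedPalm

variable {Ω E : Type*} [MeasurableSpace Ω] [AddGroup E] [MeasurableSpace E]
  {P : Measure Ω} {ξ : Ω → Measure E} {I : Measure E} {Q : E → Measure (Measure E)}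
  {Ω' : Type*} [MeasurableSpace Ω'] {P' : Measure Ω'} {ξ' : Ω' → Measure E} {I' : Measure E}
  {Q' : E → Measure (Measure E)}
  {B : Set E} {ν ν' : Measure (Measure E)} {φ : Measure E → ℝ≥0∞}

lemma ae_apply_lt_top (h : IsShiftedPalm P ξ I Q) {A : Set E} (hA : MeasurableSet A)
    (hIA : I A ≠ ∞) : ∀ᵐ ω ∂P, ξ ω A < ∞ :=
  ae_lt_top ((Measure.measurable_coe hA).comp h.measurable) (h.intensity_apply A hA ▸ hIA)

lemma weightedLaw_univ (h : IsShiftedPalm P ξ I Q) (hB : MeasurableSet B)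
    (hν : IsWeightedLaw P ξ B ν) : ν Set.univ = I B := by
  rw [hν _ .univ, Set.preimage_univ, setLIntegral_univ, h.intensity_apply B hB]

lemma intensity_le_add_tvDist [IsFiniteMeasure ν] [IsFiniteMeasure ν']
    (h : IsShiftedPalm P ξ I Q) (h' : IsShiftedPalm P' ξ' I' Q') (hB : MeasurableSet B)
    (hν : IsWeightedLaw P ξ B ν) (hν' : IsWeightedLaw P' ξ' B ν') : I B ≤ I' B + tvDist ν ν' := by
  simpa only [lintegral_one, h.weightedLaw_univ hB hν, h'.weightedLaw_univ hB hν'] using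
    lintegral_le_lintegral_add_tvDist ν ν' (g := fun _ => 1) fun _ => le_rfl

lemma setLIntegral_recenter (h : IsShiftedPalm P ξ I Q) (hB : MeasurableSet B)
    (hφ : Measurable φ) :
    ∫⁻ ω, ∫⁻ s in B, φ (recenter (ξ ω) s) ∂(ξ ω) ∂P = ∫⁻ s in B, ∫⁻ μ, φ μ ∂(Q s) ∂I := by
  have h_palm := h.lintegral_recenter ((Prod.fst ⁻¹' B).indicator (φ ∘ Prod.snd))
    ((hφ.comp measurable_snd).indicator (measurable_fst hB))
  have h_indicator (s : E) (μ : Measure E) :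
      (Prod.fst ⁻¹' B).indicator (φ ∘ Prod.snd) (s, μ) = B.indicator (fun _ => φ μ) s := rfl
  have h_inner (s : E) :
      ∫⁻ μ, B.indicator (fun _ => φ μ) s ∂(Q s) = B.indicator (fun s => ∫⁻ μ, φ μ ∂(Q s)) s := by
    by_cases hs : s ∈ B
    · simp only [Set.indicator_of_mem hs]
    · simp only [Set.indicator_of_notMem hs, lintegral_zero]
  simp only [h_indicator, h_inner] at h_palm
  rw [lintegral_indicator hB] at h_palm
  rw [← h_palm]
  exact lintegral_congr fun ω => (lintegral_indicator hB _).symm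

variable [MeasurableSub₂ E]

lemma aemeasurable_recenterAverage (h : IsShiftedPalm P ξ I Q) (hB : MeasurableSet B)
    (hν : IsWeightedLaw P ξ B ν) (hφ : Measurable φ) : AEMeasurable (recenterAverage B φ) ν := by
  have := h.sigmaFinite
  refine _root_.aemeasurable_recenterAverage (measurableSet_spanningSets I)
    (iUnion_spanningSets I) (ae_all_iff.2 fun k => ?_) hB hφ
  have hD := measurableSet_spanningSets I k
  rw [hν.eq_map_withDensity h.measurable, ae_map_iff h.measurable.aemeasurable
    (measurableSet_lt (Measure.measurable_coe hD) measurable_const)]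
  exact (withDensity_absolutelyContinuous _ _).ae_le
    (h.ae_apply_lt_top hD (measure_spanningSets_lt_top I k).ne)

lemma lintegral_recenterAverage (h : IsShiftedPalm P ξ I Q) (hB : MeasurableSet B)
    (hIB : I B ≠ ∞) (hν : IsWeightedLaw P ξ B ν) (hφ : Measurable φ) :
    ∫⁻ μ, recenterAverage B φ μ ∂ν = ∫⁻ s in B, ∫⁻ μ, φ μ ∂(Q s) ∂I := by
  have h_aemeas := h.aemeasurable_recenterAverage hB hν hφ
  have h_law := hν.eq_map_withDensity h.measurable
  rw [h_law] at h_aemeas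
  calc ∫⁻ μ, recenterAverage B φ μ ∂ν
    _ = ∫⁻ ω, recenterAverage B φ (ξ ω) ∂(P.withDensity fun ω => ξ ω B) := by
      rw [h_law, lintegral_map' h_aemeas h.measurable.aemeasurable]
    _ = ∫⁻ ω, ξ ω B * recenterAverage B φ (ξ ω) ∂P :=
      lintegral_withDensity_eq_lintegral_mul₀'
        ((Measure.measurable_coe hB).comp h.measurable).aemeasurable
        (h_aemeas.comp_measurable h.measurable)
    _ = ∫⁻ ω, ∫⁻ s in B, φ (recenter (ξ ω) s) ∂(ξ ω) ∂P :=
      lintegral_congr_ae ((h.ae_apply_lt_top hB hIB).mono fun _ hω =>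
        apply_mul_recenterAverage hω.ne)
    _ = ∫⁻ s in B, ∫⁻ μ, φ μ ∂(Q s) ∂I := h.setLIntegral_recenter hB hφ

variable [IsFiniteMeasure ν] [IsFiniteMeasure ν']

lemma lintegral_mul_le_add_tvDist [∀ s, IsFiniteMeasure (Q s)] [∀ s, IsFiniteMeasure (Q' s)]
    (h : IsShiftedPalm P ξ I Q) (h' : IsShiftedPalm P' ξ' I' Q') (hB : MeasurableSet B)
    (hν : IsWeightedLaw P ξ B ν) (hν' : IsWeightedLaw P' ξ' B ν')
    {s s' : E} {c c' : ℝ≥0∞} (hc : ∀ r ∈ B, tvDist (Q s) (Q r) ≤ c)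
    (hc' : ∀ r ∈ B, tvDist (Q' r) (Q' s') ≤ c') (hφ : Measurable φ) (hφ_le : ∀ μ, φ μ ≤ 1) :
    (∫⁻ μ, φ μ ∂(Q s)) * I B ≤
      (∫⁻ μ, φ μ ∂(Q' s')) * I' B + c' * I' B + tvDist ν ν' + c * I B := by
  have hIB : I B ≠ ∞ := h.weightedLaw_univ hB hν ▸ measure_ne_top ν _
  have hIB' : I' B ≠ ∞ := h'.weightedLaw_univ hB hν' ▸ measure_ne_top ν' _
  calc (∫⁻ μ, φ μ ∂(Q s)) * I B
    _ = ∫⁻ _ in B, ∫⁻ μ, φ μ ∂(Q s) ∂I := (setLIntegral_const _ _).symm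
    _ ≤ ∫⁻ r in B, (∫⁻ μ, φ μ ∂(Q r) + c) ∂I := setLIntegral_mono' hB fun r hr =>
      (lintegral_le_lintegral_add_tvDist _ _ hφ_le).trans (by gcongr; exact hc r hr)
    _ = ∫⁻ μ, recenterAverage B φ μ ∂ν + c * I B := by
      rw [lintegral_add_right _ measurable_const, setLIntegral_const,
        h.lintegral_recenterAverage hB hIB hν hφ]
    _ ≤ ∫⁻ μ, recenterAverage B φ μ ∂ν' + tvDist ν ν' + c * I B := by
      gcongr
      exact lintegral_le_lintegral_add_tvDist _ _ (recenterAverage_le_one hφ_le)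
    _ = ∫⁻ r in B, ∫⁻ μ, φ μ ∂(Q' r) ∂I' + tvDist ν ν' + c * I B := by
      rw [h'.lintegral_recenterAverage hB hIB' hν' hφ]
    _ ≤ ∫⁻ _ in B, (∫⁻ μ, φ μ ∂(Q' s') + c') ∂I' + tvDist ν ν' + c * I B := by
      gcongr ?_ + _ + _
      exact setLIntegral_mono' hB fun r hr =>
        (lintegral_le_lintegral_add_tvDist _ _ hφ_le).trans (by gcongr; exact hc' r hr)
    _ = (∫⁻ μ, φ μ ∂(Q' s')) * I' B + c' * I' B + tvDist ν ν' + c * I B := by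
      rw [setLIntegral_const, add_mul]

lemma tvDist_le {Q : Measure (Measure E)} [IsFiniteMeasure Q]
    [∀ s, IsProbabilityMeasure (Q' s)] (h : IsShiftedPalm P ξ I fun _ => Q)
    (h' : IsShiftedPalm P' ξ' I' Q') (hB : MeasurableSet B) (hIB : I B ≠ 0)
    (hν : IsWeightedLaw P ξ B ν) (hν' : IsWeightedLaw P' ξ' B ν') {s : E} {c : ℝ≥0∞}
    (hc : ∀ r ∈ B, tvDist (Q' s) (Q' r) ≤ c) :
    tvDist (Q' s) Q ≤ 2 * ((2 * tvDist ν' ν + c * (I B + tvDist ν' ν)) / I B) := by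
  have hIB_top : I B ≠ ∞ := h.weightedLaw_univ hB hν ▸ measure_ne_top ν _
  have h_intensity : I B ≤ I' B + tvDist ν' ν :=
    tvDist_comm ν ν' ▸ h.intensity_le_add_tvDist h' hB hν hν'
  have h_intensity' : I' B ≤ I B + tvDist ν' ν := h'.intensity_le_add_tvDist h hB hν' hν
  have h_apply_mul_le (A : Set (Measure E)) (x : ℝ≥0∞) : Q' s A * x ≤ x :=
    mul_le_of_le_one_left zero_le prob_le_one
  have h_le_of_mul_le {a b : ℝ≥0∞} (hab : a * I B ≤
      b * I B + (2 * tvDist ν' ν + c * (I B + tvDist ν' ν))) :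
      a ≤ b + (2 * tvDist ν' ν + c * (I B + tvDist ν' ν)) / I B := by
    rwa [← ENNReal.mul_le_mul_iff_left hIB hIB_top, add_mul, ENNReal.div_mul_cancel hIB hIB_top]
  refine tvDist_le_two_mul (fun A hA => h_le_of_mul_le ?_) fun A hA => h_le_of_mul_le ?_
  · have h_palm : Q' s A * I' B ≤ Q A * I B + 0 * I B + tvDist ν' ν + c * I' B := by
      simpa only [lintegral_indicator_one hA] using
        h'.lintegral_mul_le_add_tvDist h hB hν' hν (s' := 0) hc (fun _ _ => (tvDist_self Q).le)
          (measurable_one.indicator hA) (Set.indicator_le_self' fun _ _ => zero_le)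
    calc Q' s A * I B
      _ ≤ Q' s A * I' B + tvDist ν' ν := by
        grw [h_intensity, mul_add, h_apply_mul_le A (tvDist ν' ν)]
      _ ≤ Q A * I B + tvDist ν' ν + c * (I B + tvDist ν' ν) + tvDist ν' ν := by
        grw [h_palm, h_intensity', zero_mul, add_zero]
      _ = Q A * I B + (2 * tvDist ν' ν + c * (I B + tvDist ν' ν)) := by ring
  · have h_palm : Q A * I B ≤ Q' s A * I' B + c * I' B + tvDist ν' ν + 0 * I B := by
      rw [tvDist_comm ν' ν]
      simpa only [lintegral_indicator_one hA] using
        h.lintegral_mul_le_add_tvDist h' hB hν hν' (s := 0) (fun _ _ => (tvDist_self Q).le)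
          (fun r hr => (tvDist_comm _ _).trans_le (hc r hr))
          (measurable_one.indicator hA) (Set.indicator_le_self' fun _ _ => zero_le)
    calc Q A * I B
      _ ≤ Q' s A * (I B + tvDist ν' ν) + c * (I B + tvDist ν' ν) + tvDist ν' ν := by
        grw [h_palm, h_intensity', zero_mul, add_zero]
      _ ≤ Q' s A * I B + tvDist ν' ν + c * (I B + tvDist ν' ν) + tvDist ν' ν := by
        grw [mul_add, h_apply_mul_le A (tvDist ν' ν)]
      _ = Q' s A * I B + (2 * tvDist ν' ν + c * (I B + tvDist ν' ν)) := by ring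

end IsShiftedPalm

lemma sigmaFinite_of_forall_isBounded {X : Type*} [PseudoMetricSpace X] [Nonempty X]
    [MeasurableSpace X] {μ : Measure X} (hμ : ∀ A, Bornology.IsBounded A → μ A < ∞) :
    SigmaFinite μ := by
  obtain ⟨x⟩ := ‹Nonempty X›
  exact ⟨⟨⟨fun k : ℕ => Metric.closedBall x k, fun _ => trivial,
    fun _ => hμ _ Metric.isBounded_closedBall, Metric.iUnion_closedBall_nat x⟩⟩⟩

theorem palm_uniform_convergence_general {ι E Ω : Type*} {l : Filter ι} [AddGroup E]
    [MeasurableSpace E] [MeasurableSub₂ E] [MeasurableSpace Ω] {P : Measure Ω}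
    {ξ : Ω → Measure E} {I : Measure E} {Q : Measure (Measure E)} [IsFiniteMeasure Q]
    (h : IsShiftedPalm P ξ I fun _ => Q)
    {Ωn : ι → Type*} [∀ n, MeasurableSpace (Ωn n)] {Pn : ∀ n, Measure (Ωn n)}
    {ξn : ∀ n, Ωn n → Measure E} {In : ι → Measure E} {Qn : ι → E → Measure (Measure E)}
    [∀ n s, IsProbabilityMeasure (Qn n s)]
    (hn : ∀ n, IsShiftedPalm (Pn n) (ξn n) (In n) (Qn n))
    {B : Set E} (hB : MeasurableSet B) (hIB : I B ≠ 0)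
    {ν : Measure (Measure E)} [IsFiniteMeasure ν] (hν : IsWeightedLaw P ξ B ν)
    {νn : ι → Measure (Measure E)} [∀ n, IsFiniteMeasure (νn n)]
    (hνn : ∀ n, IsWeightedLaw (Pn n) (ξn n) B (νn n))
    (h_law : Tendsto (fun n => tvDist (νn n) ν) l (nhds 0))
    (h_osc : Tendsto (fun n => ⨆ r ∈ B, ⨆ s ∈ B, tvDist (Qn n r) (Qn n s)) l (nhds 0)) :
    Tendsto (fun n => ⨆ s ∈ B, tvDist (Qn n s) Q) l (nhds 0) := by
  have hIB_top : I B ≠ ∞ := h.weightedLaw_univ hB hν ▸ measure_ne_top ν _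
  let osc (n : ι) : ℝ≥0∞ := ⨆ r ∈ B, ⨆ s ∈ B, tvDist (Qn n r) (Qn n s)
  have h_le (n : ι) : ⨆ s ∈ B, tvDist (Qn n s) Q ≤
      2 * ((2 * tvDist (νn n) ν + osc n * (I B + tvDist (νn n) ν)) / I B) :=
    iSup₂_le fun s hs => h.tvDist_le (hn n) hB hIB hν (hνn n) fun r hr =>
      le_iSup₂_of_le s hs (le_iSup₂_of_le r hr le_rfl)
  refine tendsto_of_tendsto_of_tendsto_of_le_of_le tendsto_const_nhds ?_ (fun _ => zero_le) h_le
  have h_bound : Tendsto (fun n => 2 * tvDist (νn n) ν + osc n * (I B + tvDist (νn n) ν)) l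
      (nhds (2 * 0 + 0 * (I B + 0))) :=
    (ENNReal.Tendsto.const_mul h_law (.inr (by finiteness))).add
      (ENNReal.Tendsto.mul h_osc (.inr (by finiteness)) (tendsto_const_nhds.add h_law)
        (.inr (by finiteness)))
  simpa using ENNReal.Tendsto.const_mul (a := 2) (ENNReal.Tendsto.div_const h_bound (.inr hIB))
    (.inr (by finiteness))

end Palm

/-- **Lemma 2.2.** Let `ξ` and `ξₙ` be random measures on `ℝ^d` with locally finite
intensities `Iξ`, `Iξₙ`, where `ξ` is stationary, and let `Q` and `Qₙ` be versions of the
associated shifted Palm distributions. If, for a bounded Borel set `B`: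
(i) `E ξₙ B → E ξ B > 0`; (ii) `‖E[ξₙ B; ξₙ ∈ ·] - E[ξ B; ξ ∈ ·]‖ → 0`;
(iii) `sup_{r,s ∈ B} ‖Qₙ_r - Qₙ_s‖ → 0`; then `sup_{s ∈ B} ‖Qₙ_s - Q‖ → 0`. -/
theorem palm_uniform_convergence {d : ℕ} {Ω : Type*} [MeasurableSpace Ω]
    (P : Measure Ω) [IsProbabilityMeasure P]
    (ξ : Ω → Measure (EuclideanSpace ℝ (Fin d))) (hξmeas : Measurable ξ)
    (ξn : ℕ → Ω → Measure (EuclideanSpace ℝ (Fin d))) (hξnmeas : ∀ n, Measurable (ξn n))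
    -- intensity measures
    (Iξ : Measure (EuclideanSpace ℝ (Fin d)))
    (hIξ : ∀ A : Set (EuclideanSpace ℝ (Fin d)), MeasurableSet A →
      Iξ A = ∫⁻ ω, ξ ω A ∂P)
    (Iξn : ℕ → Measure (EuclideanSpace ℝ (Fin d)))
    (hIξn : ∀ n, ∀ A : Set (EuclideanSpace ℝ (Fin d)), MeasurableSet A →
      Iξn n A = ∫⁻ ω, ξn n ω A ∂P)
    -- local finiteness of the intensities
    (hIξ_lf : ∀ A : Set (EuclideanSpace ℝ (Fin d)), Bornology.IsBounded A → Iξ A < ⊤)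
    (hIξn_lf : ∀ n, ∀ A : Set (EuclideanSpace ℝ (Fin d)), Bornology.IsBounded A →
      Iξn n A < ⊤)
    -- stationarity of ξ: ξθ_x has the same distribution as ξ for every x
    (hstat : ∀ x : EuclideanSpace ℝ (Fin d),
      ∀ A : Set (Measure (EuclideanSpace ℝ (Fin d))), MeasurableSet A →
      P {ω | shiftMeasure (ξ ω) x ∈ A} = P {ω | ξ ω ∈ A})
    -- Q is a version of the shifted Palm distribution of ξ
    (Q : Measure (Measure (EuclideanSpace ℝ (Fin d)))) [IsProbabilityMeasure Q]
    (hQ : ∀ f : EuclideanSpace ℝ (Fin d) × Measure (EuclideanSpace ℝ (Fin d)) → ℝ≥0∞,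
      Measurable f →
      ∫⁻ ω, ∫⁻ s, f (s, shiftMeasure (ξ ω) s) ∂(ξ ω) ∂P
        = ∫⁻ s, ∫⁻ μ, f (s, μ) ∂Q ∂Iξ)
    -- Qₙ are versions of the shifted Palm distributions of ξₙ
    (Qn : ℕ → Kernel (EuclideanSpace ℝ (Fin d)) (Measure (EuclideanSpace ℝ (Fin d))))
    [∀ n, IsMarkovKernel (Qn n)]
    (hQn : ∀ n, ∀ f : EuclideanSpace ℝ (Fin d) × Measure (EuclideanSpace ℝ (Fin d)) → ℝ≥0∞,
      Measurable f →
      ∫⁻ ω, ∫⁻ s, f (s, shiftMeasure (ξn n ω) s) ∂(ξn n ω) ∂P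
        = ∫⁻ s, ∫⁻ μ, f (s, μ) ∂(Qn n s) ∂(Iξn n))
    -- the fixed bounded Borel set B
    (B : Set (EuclideanSpace ℝ (Fin d))) (hB : MeasurableSet B)
    (hBbdd : Bornology.IsBounded B)
    -- condition (i)
    (hi : Tendsto (fun n => Iξn n B) atTop (nhds (Iξ B))) (hIξB_pos : 0 < Iξ B)
    -- the weighted measures E[ξ B; ξ ∈ ·] and E[ξₙ B; ξₙ ∈ ·], and condition (ii)
    (ν : Measure (Measure (EuclideanSpace ℝ (Fin d)))) [IsFiniteMeasure ν]
    (hν : ∀ A : Set (Measure (EuclideanSpace ℝ (Fin d))), MeasurableSet A →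
      ν A = ∫⁻ ω in ξ ⁻¹' A, ξ ω B ∂P)
    (νn : ℕ → Measure (Measure (EuclideanSpace ℝ (Fin d)))) [∀ n, IsFiniteMeasure (νn n)]
    (hνn : ∀ n, ∀ A : Set (Measure (EuclideanSpace ℝ (Fin d))), MeasurableSet A →
      νn n A = ∫⁻ ω in (ξn n) ⁻¹' A, ξn n ω B ∂P)
    (hii : Tendsto (fun n => tvDist (νn n) ν) atTop (nhds 0))
    -- condition (iii)
    (hiii : Tendsto (fun n => ⨆ r ∈ B, ⨆ s ∈ B, tvDist (Qn n r) (Qn n s))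
      atTop (nhds 0)) :
    Tendsto (fun n => ⨆ s ∈ B, tvDist (Qn n s) Q) atTop (nhds 0) := by
  exact palm_uniform_convergence_general
    ⟨hξmeas, hIξ, sigmaFinite_of_forall_isBounded hIξ_lf, hQ⟩
    (fun n => ⟨hξnmeas n, hIξn n, sigmaFinite_of_forall_isBounded (hIξn_lf n), hQn n⟩)
    hB hIξB_pos.ne' hν hνn hii hiii
end

section
/- Let μ be a σ-finite Borel measure on ℝ^d with μ p_a < ∞ for every a > 0, and fix 0 < h < t; set s = t - h. Then ∫_{ℝ^d} ∫_{ℝ^d} | p_{sh}(x - s·u + s·r) · p_t(u - r) - p_{sh}(x - s·u) · p_t(u) | μ(du) dx → 0 as r → 0 in ℝ^d. Here s·u and s·r denote scalar multiplication of vectors, and p_{sh} is the Gaussian density with variance parameter s·h. -/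
open Filter MeasureTheory

/-- The standard Gaussian density `p_t(x) = (2πt)^{-d/2} exp(-|x|²/(2t))` on `ℝ^d`. -/
noncomputable def gaussDensity (d : ℕ) (t : ℝ) (x : EuclideanSpace ℝ (Fin d)) : ℝ :=
  (2 * Real.pi * t) ^ (-(d : ℝ) / 2) * Real.exp (-‖x‖ ^ 2 / (2 * t))

/-!
Write `f₀ = p_{sh}`, `f_r = f₀(· + s r)`, `g₀ = p_t` and `g_r = p_t(· - r)`. The identity
`f_r g_r - f₀ g₀ = (f_r - f₀)(g_r - g₀) + (f_r - f₀) g₀ + f₀ (g_r - g₀)` and the translation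
invariance of Lebesgue measure in `x` bound the double integral by products of the norms of
`f_r - f₀` and `f₀` in `L¹(dx)` with those of `g_r - g₀` and `g₀` in `L¹(μ)`. So it is enough that
`r ↦ p_t(· - r)` is continuous at `0` in `L¹(ν)` both for `ν = dx` and for `ν = μ`. This is
dominated convergence: translates of `p_t` by bounded vectors are bounded by a multiple of `p_a`,
for any `a > t`.
-/

open scoped ENNReal Topology

section ProductKernels

variable {G Y R ι : Type*} [AddGroup G] [MeasurableSpace G] [MeasurableAdd₂ G] [MeasurableNeg G]
  [MeasurableSpace Y] [NonUnitalNormedRing R] {ν : Measure G} [SFinite ν]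
  [ν.IsAddRightInvariant] {μ : Measure Y} [SFinite μ] {m : Y → G}

theorem lintegral_lintegral_comp_sub_mul {φ : G → ℝ≥0∞} {ψ : Y → ℝ≥0∞} (hm : Measurable m)
    (hφ : Measurable φ) (hψ : Measurable ψ) :
    ∫⁻ x, ∫⁻ u, φ (x - m u) * ψ u ∂μ ∂ν = (∫⁻ x, φ x ∂ν) * ∫⁻ u, ψ u ∂μ := by
  rw [lintegral_lintegral_swap (by fun_prop), ← lintegral_const_mul _ hψ]
  refine lintegral_congr fun u => ?_
  rw [lintegral_mul_const _ (by fun_prop), lintegral_sub_right_eq_self φ]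

theorem enorm_mul_sub_mul_le (a a' b b' : R) :
    ‖a' * b' - a * b‖ₑ
      ≤ ‖a' - a‖ₑ * ‖b' - b‖ₑ + ‖a' - a‖ₑ * ‖b‖ₑ + ‖a‖ₑ * ‖b' - b‖ₑ := by
  have split : a' * b' - a * b = (a' - a) * (b' - b) + (a' - a) * b + a * (b' - b) := by
    noncomm_ring
  rw [split]
  refine le_trans enorm_add₃_le ?_
  gcongr <;> exact enorm_smul_le

theorem lintegral_lintegral_enorm_mul_sub_mul_le {f f' : G → R} {g g' : Y → R}
    (hm : Measurable m) (hf : StronglyMeasurable f) (hf' : StronglyMeasurable f')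
    (hg : StronglyMeasurable g) (hg' : StronglyMeasurable g') :
    ∫⁻ x, ∫⁻ u, ‖f' (x - m u) * g' u - f (x - m u) * g u‖ₑ ∂μ ∂ν
      ≤ (∫⁻ x, ‖f' x - f x‖ₑ ∂ν) * (∫⁻ u, ‖g' u - g u‖ₑ ∂μ)
        + (∫⁻ x, ‖f' x - f x‖ₑ ∂ν) * (∫⁻ u, ‖g u‖ₑ ∂μ)
        + (∫⁻ x, ‖f x‖ₑ ∂ν) * ∫⁻ u, ‖g' u - g u‖ₑ ∂μ := by
  have hf₀ : Measurable fun x => ‖f x‖ₑ := hf.enorm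
  have hg₀ : Measurable fun u => ‖g u‖ₑ := hg.enorm
  have hδf : Measurable fun x => ‖f' x - f x‖ₑ := (hf'.sub hf).enorm
  have hδg : Measurable fun u => ‖g' u - g u‖ₑ := (hg'.sub hg).enorm
  simp only [← lintegral_lintegral_comp_sub_mul hm hδf hδg,
    ← lintegral_lintegral_comp_sub_mul hm hδf hg₀, ← lintegral_lintegral_comp_sub_mul hm hf₀ hδg]
  rw [← lintegral_add_left (by fun_prop), ← lintegral_add_left (by fun_prop)]
  refine lintegral_mono fun x => ?_
  rw [← lintegral_add_left (by fun_prop), ← lintegral_add_left (by fun_prop)]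
  exact lintegral_mono fun u => enorm_mul_sub_mul_le _ _ _ _

theorem tendsto_lintegral_lintegral_enorm_mul_sub_mul {l : Filter ι} {F : ι → G → R} {f : G → R}
    {H : ι → Y → R} {g : Y → R} (hm : Measurable m) (hF : ∀ i, StronglyMeasurable (F i))
    (hf : StronglyMeasurable f) (hH : ∀ i, StronglyMeasurable (H i)) (hg : StronglyMeasurable g)
    (hf_fin : ∫⁻ x, ‖f x‖ₑ ∂ν ≠ ∞) (hg_fin : ∫⁻ u, ‖g u‖ₑ ∂μ ≠ ∞)
    (hFf : Tendsto (fun i => ∫⁻ x, ‖F i x - f x‖ₑ ∂ν) l (𝓝 0))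
    (hHg : Tendsto (fun i => ∫⁻ u, ‖H i u - g u‖ₑ ∂μ) l (𝓝 0)) :
    Tendsto (fun i => ∫⁻ x, ∫⁻ u, ‖F i (x - m u) * H i u - f (x - m u) * g u‖ₑ ∂μ ∂ν)
      l (𝓝 0) := by
  have both_tendsto := ENNReal.Tendsto.mul hFf (.inr ENNReal.zero_ne_top) hHg
    (.inr ENNReal.zero_ne_top)
  have left_tendsto := ENNReal.Tendsto.mul_const (b := ∫⁻ u, ‖g u‖ₑ ∂μ) hFf (.inr hg_fin)
  have right_tendsto := ENNReal.Tendsto.const_mul (a := ∫⁻ x, ‖f x‖ₑ ∂ν) hHg (.inr hf_fin)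
  have bound_tendsto := (both_tendsto.add left_tendsto).add right_tendsto
  simp only [zero_mul, mul_zero, add_zero] at bound_tendsto
  exact tendsto_of_tendsto_of_tendsto_of_le_of_le tendsto_const_nhds bound_tendsto
    (fun _ => zero_le) fun i => lintegral_lintegral_enorm_mul_sub_mul_le hm hf (hF i) hg (hH i)

end ProductKernels

theorem add_sq_div_add_le {K : Type*} [Field K] [LinearOrder K] [IsStrictOrderedRing K] {s t : K}
    (hs : 0 < s) (ht : 0 < t) (x y : K) :
    (x + y) ^ 2 / (s + t) ≤ x ^ 2 / s + y ^ 2 / t := by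
  rw [div_add_div _ _ hs.ne' ht.ne', div_le_div_iff₀ (by positivity) (by positivity)]
  linear_combination sq_nonneg (t * x - s * y)

theorem norm_sq_div_le_norm_sub_sq_div_add {E : Type*} [SeminormedAddCommGroup E] {a t : ℝ}
    (ht : 0 < t) (hta : t < a) (x y : E) :
    ‖x‖ ^ 2 / a ≤ ‖x - y‖ ^ 2 / t + ‖y‖ ^ 2 / (a - t) := calc
  ‖x‖ ^ 2 / a ≤ (‖x - y‖ + ‖y‖) ^ 2 / (t + (a - t)) := by
    rw [add_sub_cancel]
    have := ht.trans hta
    gcongr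
    exact norm_le_norm_sub_add x y
  _ ≤ ‖x - y‖ ^ 2 / t + ‖y‖ ^ 2 / (a - t) := add_sq_div_add_le ht (sub_pos.2 hta) _ _

section GaussDensity

variable {d : ℕ} {a t : ℝ}

theorem continuous_gaussDensity : Continuous (gaussDensity d t) := by
  unfold gaussDensity
  fun_prop

theorem gaussDensity_nonneg (ht : 0 ≤ t) (x : EuclideanSpace ℝ (Fin d)) :
    0 ≤ gaussDensity d t x := by
  unfold gaussDensity
  positivity

theorem integral_gaussDensity (ht : 0 < t) : ∫ x, gaussDensity d t x = 1 := by
  have exponent (x : EuclideanSpace ℝ (Fin d)) :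
      -‖x‖ ^ 2 / (2 * t) = -(2 * t)⁻¹ * ‖x‖ ^ 2 := by ring
  have hpos : 0 < 2 * Real.pi * t := by positivity
  simp only [gaussDensity, exponent]
  rw [integral_const_mul, GaussianFourier.integral_rexp_neg_mul_sq_norm (by positivity),
    finrank_euclideanSpace_fin, div_inv_eq_mul, neg_div, Real.rpow_neg hpos.le,
    show Real.pi * (2 * t) = 2 * Real.pi * t by ring]
  exact inv_mul_cancel₀ (by positivity)

theorem integrable_gaussDensity (ht : 0 < t) : Integrable (gaussDensity d t) :=
  .of_integral_ne_zero (by simp [integral_gaussDensity ht])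

theorem integrable_gaussDensity_iff (ht : 0 ≤ t) {μ : Measure (EuclideanSpace ℝ (Fin d))} :
    Integrable (gaussDensity d t) μ ↔ ∫⁻ u, ENNReal.ofReal (gaussDensity d t u) ∂μ < ∞ := by
  rw [lt_top_iff_ne_top, lintegral_ofReal_ne_top_iff_integrable
    continuous_gaussDensity.aestronglyMeasurable (.of_forall (gaussDensity_nonneg ht))]

theorem gaussDensity_sub_le (ht : 0 < t) (hta : t < a) (x y : EuclideanSpace ℝ (Fin d)) :
    gaussDensity d t (x - y)
      ≤ (a / t) ^ ((d : ℝ) / 2) * Real.exp (‖y‖ ^ 2 / (2 * (a - t))) * gaussDensity d a x := by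
  have ha : 0 < a := ht.trans hta
  have exponent_le : -‖x - y‖ ^ 2 / (2 * t) ≤ ‖y‖ ^ 2 / (2 * (a - t)) + -‖x‖ ^ 2 / (2 * a) := by
    have := norm_sq_div_le_norm_sub_sq_div_add ht hta x y
    simp only [mul_comm (2 : ℝ), ← div_div, neg_div]
    linarith
  have prefactor : (2 * Real.pi * t) ^ (-(d : ℝ) / 2)
      = (a / t) ^ ((d : ℝ) / 2) * (2 * Real.pi * a) ^ (-(d : ℝ) / 2) := by
    rw [neg_div, Real.rpow_neg (by positivity), Real.rpow_neg (by positivity), ← div_eq_mul_inv,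
      ← Real.div_rpow (by positivity) (by positivity), ← Real.inv_rpow (by positivity)]
    congr 1
    field_simp
  calc gaussDensity d t (x - y)
      ≤ (2 * Real.pi * t) ^ (-(d : ℝ) / 2)
          * Real.exp (‖y‖ ^ 2 / (2 * (a - t)) + -‖x‖ ^ 2 / (2 * a)) := by
        unfold gaussDensity
        gcongr
    _ = (a / t) ^ ((d : ℝ) / 2) * Real.exp (‖y‖ ^ 2 / (2 * (a - t))) * gaussDensity d a x := by
        rw [Real.exp_add, prefactor, gaussDensity]
        ring

theorem integrable_gaussDensity_of_lt (ht : 0 < t) (hta : t < a)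
    {μ : Measure (EuclideanSpace ℝ (Fin d))} (hμ : Integrable (gaussDensity d a) μ) :
    Integrable (gaussDensity d t) μ := by
  refine (hμ.const_mul ((a / t) ^ ((d : ℝ) / 2))).mono'
    continuous_gaussDensity.aestronglyMeasurable (.of_forall fun u => ?_)
  rw [Real.norm_of_nonneg (gaussDensity_nonneg ht.le u)]
  simpa using gaussDensity_sub_le ht hta u 0

theorem gaussDensity_sub_le_of_norm_le {ρ : ℝ} (ht : 0 < t) (hta : t < a)
    {x y : EuclideanSpace ℝ (Fin d)} (hy : ‖y‖ ≤ ρ) :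
    gaussDensity d t (x - y)
      ≤ (a / t) ^ ((d : ℝ) / 2) * Real.exp (ρ ^ 2 / (2 * (a - t))) * gaussDensity d a x := by
  have ha : 0 < a := ht.trans hta
  have : 0 < a - t := sub_pos.2 hta
  have := gaussDensity_nonneg ha.le x
  refine (gaussDensity_sub_le ht hta x y).trans ?_
  gcongr

theorem tendsto_lintegral_enorm_gaussDensity_sub (ht : 0 < t) (hta : t < a)
    {μ : Measure (EuclideanSpace ℝ (Fin d))} (hμ : Integrable (gaussDensity d a) μ) :
    Tendsto (fun r => ∫⁻ u, ‖gaussDensity d t (u - r) - gaussDensity d t u‖ₑ ∂μ)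
      (𝓝 0) (𝓝 0) := by
  have hp : Continuous (gaussDensity d t) := continuous_gaussDensity
  set C := (a / t) ^ ((d : ℝ) / 2) * Real.exp (1 ^ 2 / (2 * (a - t)))
  have translate_le : ∀ r : EuclideanSpace ℝ (Fin d), ‖r‖ ≤ 1 → ∀ u,
      gaussDensity d t (u - r) ≤ C * gaussDensity d a u :=
    fun r hr u => gaussDensity_sub_le_of_norm_le ht hta hr
  have dominated : ∀ᶠ r in 𝓝 (0 : EuclideanSpace ℝ (Fin d)), ∀ᵐ u ∂μ,
      ‖gaussDensity d t (u - r) - gaussDensity d t u‖ₑ ≤ ‖C * gaussDensity d a u‖ₑ := by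
    filter_upwards [Metric.closedBall_mem_nhds 0 one_pos] with r hr
    refine .of_forall fun u => enorm_le_iff_norm_le.2 (le_trans ?_ (Real.le_norm_self _))
    exact abs_sub_le_of_nonneg_of_le
      (gaussDensity_nonneg ht.le _) (translate_le r (mem_closedBall_zero_iff.1 hr) u)
      (gaussDensity_nonneg ht.le _) (by simpa using translate_le 0 (by simp) u)
  have pointwise : ∀ u, Tendsto (fun r => ‖gaussDensity d t (u - r) - gaussDensity d t u‖ₑ)
      (𝓝 0) (𝓝 0) := fun u =>
    Continuous.tendsto' (by fun_prop) 0 0 (by simp)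
  simpa using tendsto_lintegral_filter_of_dominated_convergence _
    (.of_forall fun r => Continuous.measurable (by fun_prop)) dominated
    (hμ.const_mul C).hasFiniteIntegral.ne (.of_forall pointwise)

end GaussDensity

theorem gauss_palm_L1_continuity_general {d n : ℕ} {a c t : ℝ} (hc : 0 < c) (ht : 0 < t)
    (hta : t < a) {μ : Measure (EuclideanSpace ℝ (Fin d))} [SFinite μ]
    (hμ : Integrable (gaussDensity d a) μ)
    (A : EuclideanSpace ℝ (Fin d) →L[ℝ] EuclideanSpace ℝ (Fin n)) :
    Tendsto (fun r => ∫⁻ x, ∫⁻ u, ENNReal.ofReal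
        |gaussDensity n c (x - A u + A r) * gaussDensity d t (u - r)
          - gaussDensity n c (x - A u) * gaussDensity d t u| ∂μ ∂volume)
      (𝓝 0) (𝓝 0) := by
  have hp : Continuous (gaussDensity n c) := continuous_gaussDensity
  have hq : Continuous (gaussDensity d t) := continuous_gaussDensity
  have hA : Tendsto (fun r => -A r) (𝓝 0) (𝓝 0) := Continuous.tendsto' (by fun_prop) 0 0 (by simp)
  have hp_tendsto : Tendsto (fun r => ∫⁻ x, ‖gaussDensity n c (x + A r) - gaussDensity n c x‖ₑ)
      (𝓝 0) (𝓝 0) := by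
    simpa [Function.comp_def] using (tendsto_lintegral_enorm_gaussDensity_sub hc
      (lt_add_one c) (integrable_gaussDensity (by positivity))).comp hA
  simp only [← Real.enorm_eq_ofReal_abs]
  exact tendsto_lintegral_lintegral_enorm_mul_sub_mul
    (F := fun r x => gaussDensity n c (x + A r)) (H := fun r u => gaussDensity d t (u - r))
    A.continuous.measurable
    (fun r => (hp.comp (continuous_add_const (A r))).stronglyMeasurable) hp.stronglyMeasurable
    (fun r => (hq.comp (continuous_sub_right r)).stronglyMeasurable) hq.stronglyMeasurable
    (integrable_gaussDensity hc).hasFiniteIntegral.ne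
    (integrable_gaussDensity_of_lt ht hta hμ).hasFiniteIntegral.ne
    hp_tendsto (tendsto_lintegral_enorm_gaussDensity_sub ht hta hμ)

/-- **L¹-continuity underlying Lemma 3.5.** Let `μ` be σ-finite on `ℝ^d` with `μ p_a < ∞`
for all `a > 0`, and fix `0 < h < t`; set `s = t - h`. Then
`∫∫ |p_{sh}(x - s·u + s·r) p_t(u - r) - p_{sh}(x - s·u) p_t(u)| μ(du) dx → 0` as `r → 0`. -/
theorem gauss_palm_L1_continuity (d : ℕ)
    (μ : Measure (EuclideanSpace ℝ (Fin d))) [SigmaFinite μ]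
    (hμ : ∀ a : ℝ, 0 < a → ∫⁻ u, ENNReal.ofReal (gaussDensity d a u) ∂μ < ⊤)
    (t h : ℝ) (hh : 0 < h) (hht : h < t) :
    Tendsto (fun r : EuclideanSpace ℝ (Fin d) =>
        ∫⁻ x, ∫⁻ u, ENNReal.ofReal
          |gaussDensity d ((t - h) * h) (x - (t - h) • u + (t - h) • r)
              * gaussDensity d t (u - r)
            - gaussDensity d ((t - h) * h) (x - (t - h) • u) * gaussDensity d t u|
          ∂μ ∂volume)
      (nhds 0) (nhds 0) := by
  have ht : 0 < t := hh.trans hht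
  have hc : 0 < (t - h) * h := mul_pos (sub_pos.2 hht) hh
  have hμ' : Integrable (gaussDensity d (t + 1)) μ :=
    (integrable_gaussDensity_iff (by positivity)).2 (hμ _ (by positivity))
  exact gauss_palm_L1_continuity_general hc ht (lt_add_one t) hμ'
    (ContinuousLinearMap.lsmul ℝ ℝ (t - h))
end
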